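/- Let n ≥ 1 and 1 ≤ k ≤ n. For each i with 0 ≤ i ≤ n, the number of paths p in 𝒫(n,1,0) with exactly k descending runs and exactly i up steps below the x-axis equals the Narayana number (1/(n+1))·C(n+1,k)·C(n−1,k−1); in particular this count is independent of i. -/

import Mathlib

open Finset

/-- The sum of the first `m` entries of a sequence `p` of length `N` (the height `s_m`). -/
def psum {N : ℕ} (p : Fin N → ℤ) (m : ℕ) : ℤ :=
  ∑ j ∈ Finset.univ.filter (fun j : Fin N => (j : ℕ) < m), p j

namespace NCF

def sgn (b : Bool) : ℤ := if b then 1 else -1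

def ups {N : ℕ} (b : Fin N → Bool) : ℕ := (univ.filter (fun m => b m = true)).card

def R {N : ℕ} (q : Bool) (b : Fin N → Bool) : ℕ :=
  (univ.filter (fun m : Fin N => b m = false ∧
    (Fin.cons q b : Fin (N+1) → Bool) m.castSucc = true)).card

lemma ups_cons {N : ℕ} (x : Bool) (b : Fin N → Bool) :
    ups (Fin.cons x b : Fin (N+1) → Bool) = (if x = true then 1 else 0) + ups b := by
  unfold ups
  rw [Fin.card_filter_univ_succ]
  simp only [Fin.cons_zero, Fin.cons_succ]
  split_ifs <;> omega

lemma R_cons {N : ℕ} (q x : Bool) (b : Fin N → Bool) :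
    R q (Fin.cons x b : Fin (N+1) → Bool) =
      (if x = false ∧ q = true then 1 else 0) + R x b := by
  unfold R
  rw [Fin.card_filter_univ_succ]
  simp only [Fin.cons_zero, Fin.cons_succ, Fin.castSucc_zero, Fin.castSucc_succ]
  split_ifs <;> omega

def F (q : Bool) (N a k : ℕ) : ℕ :=
  (univ.filter (fun b : Fin N → Bool => ups b = a ∧ R q b = k)).card

lemma card_cons_split {N : ℕ} (P : (Fin (N+1) → Bool) → Prop) [DecidablePred P] :
    (univ.filter P).card =
      (univ.filter (fun b : Fin N → Bool => P (Fin.cons true b))).card +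
      (univ.filter (fun b : Fin N → Bool => P (Fin.cons false b))).card := by
  classical
  simp only [Finset.card_filter]
  rw [← (Fin.consEquiv (fun _ : Fin (N+1) => Bool)).sum_comp, Fintype.sum_prod_type]
  rw [Fintype.sum_bool]
  rfl

lemma F_zero (q : Bool) (a k : ℕ) : F q 0 a k = if a = 0 ∧ k = 0 then 1 else 0 := by
  unfold F ups R
  simp only [Finset.univ_eq_empty, Finset.filter_empty, Finset.card_empty]
  split_ifs with h
  · obtain ⟨rfl, rfl⟩ := h; simp
  · rw [Finset.card_eq_zero, Finset.filter_eq_empty_iff]; intro x _ hx; exact h ⟨hx.1.symm, hx.2.symm⟩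

lemma F_true_zero (N a : ℕ) (k : ℕ) : F true (N+1) (a+1) k = F true N a k + F false N (a+1) (k-1) * (if k = 0 then 0 else 1) := by
  unfold F
  rw [card_cons_split]
  simp only [ups_cons, R_cons]
  congr 1
  · congr 1; ext b; simp; omega
  · by_cases h : k = 0
    · subst h; simp
    · rw [if_neg h, mul_one]; congr 1; ext b; simp; omega

lemma F_true_zero' (N : ℕ) (k : ℕ) : F true (N+1) 0 k = F false N 0 (k-1) * (if k = 0 then 0 else 1) := by
  unfold F
  rw [card_cons_split]
  simp only [ups_cons, R_cons]
  simp
  split_ifs with h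
  · subst h; simp
  · congr 1; ext b; simp; omega

lemma F_false_succ (N a : ℕ) (k : ℕ) : F false (N+1) (a+1) k = F true N a k + F false N (a+1) k := by
  unfold F
  rw [card_cons_split]
  simp only [ups_cons, R_cons]
  congr 1
  · congr 1; ext b; simp; omega
  · congr 1; ext b; simp

lemma F_false_zero (N : ℕ) (k : ℕ) : F false (N+1) 0 k = F false N 0 k := by
  unfold F
  rw [card_cons_split]
  simp only [ups_cons, R_cons]
  simp

/-- closed forms -/
def G (a b k : ℕ) : ℕ := match b, k with
  | 0, 0 => 1
  | 0, _+1 => 0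
  | _+1, 0 => 0
  | b+1, k+1 => (a+1).choose (k+1) * b.choose k

/-- too many ups -/
lemma F_big (q : Bool) (N a k : ℕ) (h : N < a) : F q N a k = 0 := by
  unfold F ups
  rw [Finset.card_eq_zero, Finset.filter_eq_empty_iff]
  intro b _ hb
  have := Finset.card_filter_le (univ : Finset (Fin N)) (fun m => b m = true)
  simp at this; omega

lemma F_formula (N : ℕ) : ∀ a b k : ℕ, a + b = N →
    F true N a k = G a b k ∧ F false N a k = a.choose k * b.choose k := by
  induction N with
  | zero =>
    intro a b k h
    obtain ⟨rfl, rfl⟩ : a = 0 ∧ b = 0 := by omega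
    rw [F_zero, F_zero]
    cases k <;> simp [G]
  | succ N ih =>
    intro a b k h
    cases a with
    | zero =>
      obtain rfl : b = N + 1 := by omega
      rw [F_true_zero', F_false_zero, (ih 0 N _ (by omega)).2, (ih 0 N _ (by omega)).2]
      cases k with
      | zero => simp [G]
      | succ k => cases k <;> simp [G, Nat.choose_eq_zero_of_lt]
    | succ a =>
      rw [F_true_zero, F_false_succ, (ih a b _ (by omega)).1]
      cases b with
      | zero =>
        rw [F_big false N (a+1) _ (by omega), F_big false N (a+1) _ (by omega)]
        cases k <;> simp [G]
      | succ b =>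
        rw [(ih (a+1) b _ (by omega)).2, (ih (a+1) b _ (by omega)).2]
        cases k with
        | zero => simp [G]
        | succ k =>
          simp only [G, Nat.choose_succ_succ (a+1) k, Nat.choose_succ_succ b k]
          simp
          constructor <;> ring

lemma total_count (n k : ℕ) (hn : 1 ≤ n) (hk : 1 ≤ k) :
    F true (2*n) n k = (n+1).choose k * (n-1).choose (k-1) := by
  rw [((F_formula (2*n)) n n k (by omega)).1]
  obtain ⟨n, rfl⟩ := Nat.exists_eq_add_of_le' hn
  obtain ⟨k, rfl⟩ := Nat.exists_eq_add_of_le' hk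
  rfl
lemma rank_unique {α β : Type*} [DecidableEq α] [LinearOrder β] (A : Finset α) (f : α → β)
    (hf : Function.Injective f) (i : ℕ) (hi : i < A.card) :
    (A.filter (fun u => (A.filter (fun d => f d < f u)).card = i)).card = 1 := by
  have hlt : ∀ u ∈ A, ∀ v, f u < f v →
      (A.filter (fun d => f d < f u)).card < (A.filter (fun d => f d < f v)).card := by
    intro u hu v huv
    apply Finset.card_lt_card
    rw [Finset.ssubset_iff_of_subset]
    · exact ⟨u, by simp [hu, huv], by simp⟩
    · intro d hd
      simp only [Finset.mem_filter] at hd ⊢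
      exact ⟨hd.1, hd.2.trans huv⟩
  have hinj : Set.InjOn (fun u => (A.filter (fun d => f d < f u)).card) A := by
    intro u hu v hv h
    rcases lt_trichotomy (f u) (f v) with h1 | h1 | h1
    · exact absurd h (hlt u hu v h1).ne
    · exact hf h1
    · exact absurd h (hlt v hv u h1).ne'
  have himg : A.image (fun u => (A.filter (fun d => f d < f u)).card) = range A.card := by
    apply Finset.eq_of_subset_of_card_le
    · intro x hx
      obtain ⟨u, hu, rfl⟩ := Finset.mem_image.1 hx
      rw [Finset.mem_range]
      apply Finset.card_lt_card
      rw [Finset.ssubset_iff_of_subset (Finset.filter_subset _ _)]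
      exact ⟨u, hu, by simp⟩
    · rw [Finset.card_image_of_injOn hinj, Finset.card_range]
  have : i ∈ A.image (fun u => (A.filter (fun d => f d < f u)).card) := by
    rw [himg]; simpa using hi
  obtain ⟨u, hu, hui⟩ := Finset.mem_image.1 this
  rw [Finset.card_eq_one]
  refine ⟨u, ?_⟩
  ext v
  simp only [Finset.mem_filter, Finset.mem_singleton]
  constructor
  · rintro ⟨hv, h⟩
    exact hinj hv hu (h.trans hui.symm)
  · rintro rfl; exact ⟨hu, hui⟩

def S {K : ℕ} (w : Fin (K+1) → Bool) (m : ℕ) : ℤ :=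
  ∑ j ∈ range m, sgn (w (Fin.ofNat (K+1) j))

def Rc {K : ℕ} (w : Fin (K+1) → Bool) : ℕ :=
  (univ.filter (fun m => w m = false ∧ w (m - 1) = true)).card

def B {K : ℕ} (w : Fin (K+1) → Bool) : ℕ :=
  (univ.filter (fun m : Fin (K+1) => w m = true ∧ S w m < 0)).card

def rot {K : ℕ} (u : Fin (K+1)) : (Fin (K+1) → Bool) ≃ (Fin (K+1) → Bool) :=
  Equiv.arrowCongr (Equiv.subRight (u + 1)) (Equiv.refl Bool)

lemma rot_apply {K : ℕ} (u : Fin (K+1)) (w : Fin (K+1) → Bool) (x : Fin (K+1)) :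
    rot u w x = w (x + (u + 1)) := by
  simp [rot, Equiv.arrowCongr]

lemma ups_rot {K : ℕ} (u : Fin (K+1)) (w : Fin (K+1) → Bool) : ups (rot u w) = ups w := by
  unfold ups
  apply Finset.card_equiv (Equiv.addRight (u+1))
  intro x
  simp only [Finset.mem_filter, Finset.mem_univ, true_and, rot_apply, Equiv.coe_addRight]

lemma Rc_rot {K : ℕ} (u : Fin (K+1)) (w : Fin (K+1) → Bool) : Rc (rot u w) = Rc w := by
  unfold Rc
  apply Finset.card_equiv (Equiv.addRight (u+1))
  intro x
  have : x - 1 + (u + 1) = x + (u+1) - 1 := by abel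
  simp only [Finset.mem_filter, Finset.mem_univ, true_and, rot_apply, this, Equiv.coe_addRight]

lemma ofNat_add_val {K : ℕ} (u : Fin (K+1)) (j : ℕ) :
    Fin.ofNat (K+1) j + (u + 1) = Fin.ofNat (K+1) (u.val + 1 + j) := by
  apply Fin.ext
  simp only [Fin.val_add, Fin.val_ofNat, Fin.val_one']
  simp only [Nat.add_mod_mod, Nat.mod_add_mod]
  congr 1; omega

lemma S_add {K : ℕ} (w : Fin (K+1) → Bool) (a m : ℕ) :
    S w (a + m) = S w a + ∑ j ∈ range m, sgn (w (Fin.ofNat (K+1) (a + j))) := by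
  unfold S
  rw [Finset.sum_range_add]

lemma S_rot {K : ℕ} (u : Fin (K+1)) (w : Fin (K+1) → Bool) (m : ℕ) :
    S (rot u w) m = S w (u.val + 1 + m) - S w (u.val + 1) := by
  rw [S_add]
  unfold S
  simp only [rot_apply, ofNat_add_val]
  ring

lemma S_full {n : ℕ} (w : Fin (2*n+1) → Bool) (h : ups w = n + 1) : S w (2*n+1) = 1 := by
  unfold S
  rw [← Fin.sum_univ_eq_sum_range (fun j => sgn (w (Fin.ofNat (2*n+1) j)))]
  have h1 : ∀ x : Fin (2*n+1), Fin.ofNat (2*n+1) (x : ℕ) = x := by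
    intro x; apply Fin.ext; simp [Nat.mod_eq_of_lt x.2]
  simp only [h1]
  have h2 : ∀ x, sgn (w x) = 2 * (if w x = true then 1 else 0) - 1 := by
    intro x; unfold sgn; split_ifs <;> norm_num
  simp only [h2, Finset.sum_sub_distrib, ← Finset.mul_sum]
  unfold ups at h
  rw [Finset.sum_boole, h]
  simp; ring

lemma S_wrap {n : ℕ} (w : Fin (2*n+1) → Bool) (h : ups w = n + 1) (m : ℕ) :
    S w (2*n+1+m) = S w m + 1 := by
  rw [S_add, S_full w h]
  have : ∀ j, Fin.ofNat (2*n+1) (2*n+1+j) = Fin.ofNat (2*n+1) j := by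
    intro j; apply Fin.ext; simp
  simp only [this]
  unfold S; ring

lemma S_succ {K : ℕ} (w : Fin (K+1) → Bool) (u : Fin (K+1)) (hu : w u = true) :
    S w (u.val + 1) = S w u.val + 1 := by
  unfold S
  rw [Finset.sum_range_succ]
  have h1 : Fin.ofNat (K+1) (u : ℕ) = u := by
    apply Fin.ext; simp [Nat.mod_eq_of_lt u.2]
  rw [h1, hu]; simp [sgn]

def key {K : ℕ} (w : Fin (K+1) → Bool) (d : Fin (K+1)) : ℤ ×ₗ ℤ := toLex (S w d.val, -(d.val : ℤ))

lemma key_inj {K : ℕ} (w : Fin (K+1) → Bool) : Function.Injective (key w) := by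
  intro a b h
  unfold key at h
  have h := congrArg (fun z => (ofLex z).2) h
  simp at h
  exact Fin.ext (by exact_mod_cast h)

lemma B_rot {n : ℕ} (w : Fin (2*n+1) → Bool) (h : ups w = n + 1) (u : Fin (2*n+1))
    (hu : w u = true) :
    B (rot u w) =
      ((univ.filter (fun d => w d = true)).filter (fun d => key w d < key w u)).card := by
  unfold B
  apply Finset.card_equiv (Equiv.addRight (u+1))
  intro x
  simp only [Finset.mem_filter, Finset.mem_univ, true_and, rot_apply, Equiv.coe_addRight]
  refine and_congr_right (fun _ => ?_)
  rw [S_rot, S_succ w u hu, key, key, Prod.Lex.lt_iff]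
  simp only [ofLex_toLex]
  have hv : (x + (u + 1)).val = (u.val + 1 + x.val) % (2*n+1) := by
    have := congrArg Fin.val (ofNat_add_val u x.val)
    have h1 : Fin.ofNat (2*n+1) (x : ℕ) = x := by
      apply Fin.ext; simp [Nat.mod_eq_of_lt x.2]
    rw [h1] at this
    rw [this]; simp
  have hx := x.2
  have hu2 := u.2
  by_cases hlt : u.val + 1 + x.val < 2*n+1
  · rw [Nat.mod_eq_of_lt hlt] at hv
    rw [hv]
    push_cast
    constructor
    · intro h; omega
    · intro h; omega
  · obtain ⟨y, hy⟩ := Nat.exists_eq_add_of_le (not_lt.1 hlt)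
    rw [hy] at hv ⊢
    rw [Nat.add_mod_left, Nat.mod_eq_of_lt (by omega)] at hv
    rw [hv, S_wrap w h]
    constructor
    · intro h; omega
    · intro h; omega

def Y (n k i : ℕ) : Finset (Fin (2*n+1) → Bool) :=
  univ.filter (fun w => (ups w = n+1 ∧ Rc w = k) ∧ (w (-1) = true ∧ B w = i))

lemma Y_count (n k i : ℕ) (hi : i ≤ n) :
    (2*n+1) * (Y n k i).card =
      (univ.filter (fun w : Fin (2*n+1) → Bool => ups w = n+1 ∧ Rc w = k)).card := by
  have h1 : ∀ u : Fin (2*n+1), (Y n k i).card =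
      ((univ.filter (fun w : Fin (2*n+1) → Bool => ups w = n+1 ∧ Rc w = k)).filter
        (fun w => w u = true ∧ B (rot u w) = i)).card := by
    intro u
    symm
    apply Finset.card_equiv (rot u)
    intro w
    unfold Y
    simp only [Finset.mem_filter, Finset.mem_univ, true_and, ups_rot, Rc_rot]
    rw [rot_apply]
    have : -1 + (u + 1) = u := by abel
    rw [this]
  have h2 : (2*n+1) * (Y n k i).card = ∑ u : Fin (2*n+1),
      ((univ.filter (fun w : Fin (2*n+1) → Bool => ups w = n+1 ∧ Rc w = k)).filter
        (fun w => w u = true ∧ B (rot u w) = i)).card := by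
    rw [Finset.sum_congr rfl (fun u _ => (h1 u).symm)]
    simp
  rw [h2]
  simp only [Finset.card_filter _ (univ.filter _)]
  rw [Finset.sum_comm]
  rw [Finset.card_eq_sum_ones]
  apply Finset.sum_congr rfl
  intro w hw
  simp only [Finset.mem_filter, Finset.mem_univ, true_and] at hw
  rw [← Finset.card_filter, ← Finset.filter_filter]
  refine Eq.trans ?_ (rank_unique (univ.filter (fun d => w d = true)) (key w) (key_inj w) i
    (by have := hw.1; unfold ups at this; omega))
  congr 1
  apply Finset.filter_congr
  intro u hu
  rw [B_rot w hw.1 u (by simpa using hu)]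

/-- path statistic -/
def Bp {N : ℕ} (b : Fin N → Bool) : ℕ :=
  (univ.filter (fun m : Fin N => b m = true ∧ psum (fun j => sgn (b j)) (m : ℕ) < 0)).card

lemma neg_one_last (N : ℕ) : (-1 : Fin (N+1)) = Fin.last N := by
  rw [neg_eq_iff_add_eq_zero]
  apply Fin.ext
  simp [Fin.val_add, add_comm]

lemma ups_snoc {N : ℕ} (b : Fin N → Bool) :
    ups (Fin.snoc b true : Fin (N+1) → Bool) = ups b + 1 := by
  unfold ups
  simp only [Finset.card_filter]
  rw [Fin.sum_univ_castSucc]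
  simp

lemma Rc_snoc {N : ℕ} (b : Fin N → Bool) :
    Rc (Fin.snoc b true : Fin (N+1) → Bool) = R true b := by
  unfold Rc R
  simp only [Finset.card_filter]
  rw [Fin.sum_univ_castSucc]
  simp only [Fin.snoc_castSucc, Fin.snoc_last]
  simp only [Bool.true_eq_false, false_and, if_false, add_zero]
  apply Finset.sum_congr rfl
  intro m _
  have : (Fin.snoc b true : Fin (N+1) → Bool) (m.castSucc - 1) =
      (Fin.cons true b : Fin (N+1) → Bool) m.castSucc := by
    cases N with
    | zero => exact m.elim0
    | succ N =>
      refine Fin.cases ?_ (fun j => ?_) m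
      · have : (Fin.castSucc (0 : Fin (N+1))) - 1 = Fin.last (N+1) := by
          rw [Fin.castSucc_zero, zero_sub, neg_one_last]
        rw [this]; simp
      · have : (Fin.castSucc (Fin.succ j)) - 1 = Fin.castSucc (Fin.castSucc j) := by
          rw [sub_eq_iff_eq_add]
          apply Fin.ext
          simp
        rw [this, Fin.snoc_castSucc, Fin.castSucc_succ, Fin.cons_succ]
  rw [this]

lemma S_snoc {N : ℕ} (b : Fin N → Bool) (m : ℕ) (hm : m ≤ N) :
    S (Fin.snoc b true : Fin (N+1) → Bool) m = psum (fun j => sgn (b j)) m := by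
  unfold S psum
  symm
  apply Finset.sum_bij (fun (j : Fin N) _ => (j : ℕ))
  · intro a ha; simpa using ha
  · intro a _ c _ h; exact Fin.ext h
  · intro c hc
    rw [Finset.mem_range] at hc
    exact ⟨⟨c, by omega⟩, by simpa using hc, rfl⟩
  · intro a _
    have : Fin.ofNat (N+1) (a : ℕ) = a.castSucc := by
      apply Fin.ext; simp
    rw [this, Fin.snoc_castSucc]

lemma B_snoc {n : ℕ} (b : Fin (2*n) → Bool) (hb : ups b = n) :
    B (Fin.snoc b true : Fin (2*n+1) → Bool) = Bp b := by
  unfold B Bp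
  simp only [Finset.card_filter]
  rw [Fin.sum_univ_castSucc]
  have h0 : S (Fin.snoc b true : Fin (2*n+1) → Bool) (2*n) = 0 := by
    have h1 := S_full (Fin.snoc b true : Fin (2*n+1) → Bool) (by rw [ups_snoc, hb])
    have h2 := S_succ (Fin.snoc b true : Fin (2*n+1) → Bool) (Fin.last _) (by simp)
    simp only [Fin.val_last] at h2
    omega
  simp only [Fin.snoc_castSucc, Fin.snoc_last, Fin.val_last, h0, Fin.val_castSucc]
  simp only [lt_irrefl, and_false, if_false, add_zero]
  apply Finset.sum_congr rfl
  intro m _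
  rw [S_snoc b m m.2.le]

def P (n k i : ℕ) : Finset (Fin (2*n) → Bool) :=
  univ.filter (fun b => (ups b = n ∧ R true b = k) ∧ Bp b = i)

lemma P_card (n k i : ℕ) : (P n k i).card = (Y n k i).card := by
  apply Finset.card_bij (fun b _ => (Fin.snoc b true : Fin (2*n+1) → Bool))
  · intro b hb
    simp only [P, Y, Finset.mem_filter, Finset.mem_univ, true_and] at hb ⊢
    rw [ups_snoc, Rc_snoc, B_snoc b hb.1.1, hb.1.1, hb.1.2, hb.2]
    have : (-1 : Fin (2*n+1)) = Fin.last _ := neg_one_last _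
    rw [this]; simp
  · intro a _ b _ h
    have := congrArg (fun f : Fin (2*n+1) → Bool => (Fin.init f : Fin (2*n) → Bool)) h
    simpa using this
  · intro w hw
    simp only [P, Y, Finset.mem_filter, Finset.mem_univ, true_and] at hw ⊢
    have h1 : (-1 : Fin (2*n+1)) = Fin.last _ := neg_one_last _
    rw [h1] at hw
    have h2 : (Fin.snoc (Fin.init w : Fin (2*n) → Bool) true : Fin (2*n+1) → Bool) = w := by
      rw [← hw.2.1]; exact Fin.snoc_init_self w
    refine ⟨Fin.init w, ?_, h2⟩
    have h3 : ups (Fin.init w : Fin (2*n) → Bool) = n := by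
      have := ups_snoc (Fin.init w : Fin (2*n) → Bool)
      rw [h2, hw.1.1] at this; omega
    rw [← Rc_snoc, ← B_snoc _ h3, h2]
    exact ⟨⟨h3, hw.1.2⟩, hw.2.2⟩

lemma P_total (n k i : ℕ) (hi : i ≤ n) : (P n k i).card * (n+1) = F true (2*n) n k := by
  have h1 : F true (2*n) n k = ∑ j ∈ range (n+1), (P n k j).card := by
    unfold F
    rw [Finset.card_eq_sum_card_fiberwise (f := Bp) (t := range (n+1))]
    · apply Finset.sum_congr rfl
      intro j _
      unfold P
      rw [Finset.filter_filter]
    · intro b hb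
      simp only [Finset.coe_filter, Finset.mem_univ, true_and, Set.mem_setOf_eq] at hb
      simp only [Finset.coe_range, Set.mem_Iio]
      have : Bp b ≤ ups b := by
        apply Finset.card_le_card
        intro m hm
        simp only [Finset.mem_filter, Finset.mem_univ, true_and] at hm ⊢
        exact hm.1
      omega
  rw [h1]
  have h2 : ∀ j ∈ range (n+1), (P n k j).card = (P n k i).card := by
    intro j hj
    rw [Finset.mem_range] at hj
    have a := Y_count n k i hi
    have b := Y_count n k j (by omega)
    rw [P_card, P_card]
    exact Nat.eq_of_mul_eq_mul_left (by omega : 0 < 2*n+1) (b.trans a.symm)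
  rw [Finset.sum_congr rfl h2]
  simp [mul_comm]

lemma sgn_eq_one (b : Bool) : sgn b = 1 ↔ b = true := by cases b <;> simp [sgn]
lemma sgn_eq_neg (b : Bool) : sgn b = -1 ↔ b = false := by cases b <;> simp [sgn]

lemma R_eq {N : ℕ} (b : Fin N → Bool) : R true b =
    (univ.filter (fun m : Fin N =>
        sgn (b m) = -1 ∧ ∀ m' : Fin N, (m' : ℕ) + 1 = (m : ℕ) → sgn (b m') = 1)).card := by
  unfold R
  congr 1
  apply Finset.filter_congr
  intro m _
  simp only [sgn_eq_one, sgn_eq_neg]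
  refine and_congr_right (fun _ => ?_)
  cases N with
  | zero => exact m.elim0
  | succ N =>
    refine Fin.cases ?_ (fun j => ?_) m
    · simp
    · rw [Fin.castSucc_succ, Fin.cons_succ]
      constructor
      · intro h m' hm
        have : m' = j.castSucc := by apply Fin.ext; simpa using hm
        rw [this, h]
      · intro h
        exact h _ (by simp)

end NCF

theorem narayana_chung_feller_descending_runs (n k : ℕ) (hn : 1 ≤ n) (hk1 : 1 ≤ k)
    (hk2 : k ≤ n) (i : ℕ) (hi : i ≤ n) :
    Nat.card {p : Fin (2*n) → ℤ //
      (∀ m, p m = 1 ∨ p m = -1) ∧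
      (univ.filter (fun m => p m = 1)).card = n ∧
      (univ.filter (fun m : Fin (2*n) =>
        p m = -1 ∧ ∀ m' : Fin (2*n), (m' : ℕ) + 1 = (m : ℕ) → p m' = 1)).card = k ∧
      (univ.filter (fun m : Fin (2*n) => p m = 1 ∧ psum p (m : ℕ) < 0)).card = i }
      * (n + 1) = Nat.choose (n+1) k * Nat.choose (n-1) (k-1) := by
  rw [← NCF.total_count n k hn hk1, ← NCF.P_total n k i hi]
  congr 1
  rw [← Nat.card_eq_finsetCard]
  symm
  refine Nat.card_congr (Equiv.ofBijective
    (fun b => ⟨fun m => NCF.sgn (b.1 m), ?_, ?_, ?_, ?_⟩) ⟨?_, ?_⟩)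
  · intro m
    cases b.1 m <;> simp [NCF.sgn]
  · have hb := b.2
    simp only [NCF.P, Finset.mem_filter, Finset.mem_univ, true_and] at hb
    simp only [NCF.sgn_eq_one]
    exact hb.1.1
  · have hb := b.2
    simp only [NCF.P, Finset.mem_filter, Finset.mem_univ, true_and] at hb
    rw [← NCF.R_eq]
    exact hb.1.2
  · have hb := b.2
    simp only [NCF.P, Finset.mem_filter, Finset.mem_univ, true_and] at hb
    simp only [NCF.sgn_eq_one]
    exact hb.2
  · intro a b h
    apply Subtype.ext
    funext m
    have h1 := congrFun (congrArg Subtype.val h) m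
    simp only at h1
    revert h1
    cases a.1 m <;> cases b.1 m <;> simp [NCF.sgn]
  · rintro ⟨p, h0, h1, h2, h3⟩
    have hp : (fun m => NCF.sgn (decide (p m = 1))) = p := by
      funext m
      rcases h0 m with h | h <;> simp [h, NCF.sgn]
    refine ⟨⟨fun m => decide (p m = 1), ?_⟩, ?_⟩
    · simp only [NCF.P, Finset.mem_filter, Finset.mem_univ, true_and]
      refine ⟨⟨?_, ?_⟩, ?_⟩
      · simpa [NCF.ups] using h1
      · rw [NCF.R_eq]
        have hp' : ∀ m, NCF.sgn (decide (p m = 1)) = p m := congrFun hp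
        simp only [hp']
        exact h2
      · unfold NCF.Bp
        rw [hp]
        simpa using h3
    · exact Subtype.ext hp
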